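/- arXiv:1609.00973 — 2 statements merged into one kernel-verified Lean document; each statement's English description precedes it below -/
import Mathlib

section
/- If Λ is a Λ-sequence and f : [0,1] → ℝ is of bounded Λ-variation (such a function is bounded, Borel measurable and hence Lebesgue-integrable), then V_Λ(K_nf) ≤ V_Λ(f) for every n ∈ ℕ (the Kantorovich polynomials diminish the Λ-variation). -/
open Filter Set MeasureTheory
open scoped ENNReal Topology

/-- `l` is a Λ-sequence (indexed from 0, so `l 0` plays the role of `λ₁`):
a nondecreasing sequence of positive reals whose reciprocals have divergent sum. -/
def IsLambdaSeq (l : ℕ → ℝ) : Prop :=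
  Monotone l ∧ (∀ n, 0 < l n) ∧ ¬ Summable (fun n => 1 / l n)

/-- A proper Λ-sequence: additionally `λₙ → ∞`. -/
def IsProperLambdaSeq (l : ℕ → ℝ) : Prop :=
  IsLambdaSeq l ∧ Tendsto l atTop atTop

/-- The Λ-variation of `f` computed over partition points taken from `K`:
the supremum of `∑ⱼ |f(x_{j+1}) - f(x_j)| / λ_{β(j)}` over all `m`, all nondecreasing
tuples `x₁ ≤ … ≤ x_{m+1}` of points of `K` and all permutations `β` of the gaps. -/
noncomputable def lamVarOn (l : ℕ → ℝ) (f : ℝ → ℝ) (K : Set ℝ) : ℝ≥0∞ :=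
  ⨆ (m : ℕ) (x : Fin (m + 1) → ℝ) (_ : Monotone x) (_ : ∀ j, x j ∈ K)
    (β : Equiv.Perm (Fin m)),
    ∑ j : Fin m, ENNReal.ofReal (|f (x j.succ) - f (x j.castSucc)| / l (β j))

/-- The Λ-variation of `f : [0,1] → ℝ`. -/
noncomputable def lamVar (l : ℕ → ℝ) (f : ℝ → ℝ) : ℝ≥0∞ :=
  lamVarOn l f (Set.Icc 0 1)

/-- The norm `‖f‖_Λ = V_Λ(f) + |f 0|` (valued in `[0,∞]`). -/
noncomputable def lamNorm (l : ℕ → ℝ) (f : ℝ → ℝ) : ℝ≥0∞ :=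
  lamVar l f + ENNReal.ofReal |f 0|

/-- `f` is continuous in Λ-variation: `V_{Λ_(m)}(f) → 0` as `m → ∞`. -/
def ContInLamVar (l : ℕ → ℝ) (f : ℝ → ℝ) : Prop :=
  Tendsto (fun m => lamVar (fun n => l (n + m)) f) atTop (𝓝 0)

/-- The restricted Λ-variation `V_{Λ,δ}(f)`: the supremum of `∑ⱼ |f(bⱼ) - f(aⱼ)| / λⱼ`
over all finite sequences of nonoverlapping closed subintervals `[aⱼ, bⱼ]` of `[0,1]`
of length at most `δ`, listed in any order. -/
noncomputable def lamVarDelta (l : ℕ → ℝ) (δ : ℝ) (f : ℝ → ℝ) : ℝ≥0∞ :=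
  ⨆ (k : ℕ) (a : Fin k → ℝ) (b : Fin k → ℝ)
    (_ : ∀ j, 0 ≤ a j ∧ a j ≤ b j ∧ b j ≤ 1 ∧ b j - a j ≤ δ)
    (_ : ∀ i j, i ≠ j → b i ≤ a j ∨ b j ≤ a i),
    ∑ j : Fin k, ENNReal.ofReal (|f (b j) - f (a j)| / l j)

/-- The `n`-th Bernstein polynomial of `f : [0,1] → ℝ`. -/
noncomputable def bern (n : ℕ) (f : ℝ → ℝ) (x : ℝ) : ℝ :=
  ∑ k ∈ Finset.range (n + 1),
    f ((k : ℝ) / n) * (n.choose k : ℝ) * x ^ k * (1 - x) ^ (n - k)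

/-- The `n`-th Kantorovich polynomial of `f : [0,1] → ℝ`. -/
noncomputable def kant (n : ℕ) (f : ℝ → ℝ) (x : ℝ) : ℝ :=
  ∑ k ∈ Finset.range (n + 1),
    (n.choose k : ℝ) * x ^ k * (1 - x) ^ (n - k) *
      ((n + 1) * ∫ t in ((k : ℝ) / (n + 1))..(((k : ℝ) + 1) / (n + 1)), f t)

/-!
Let `U₁, …, Uₙ, T` be independent and uniform on `[0, 1]`. Since the number of `i` with `Uᵢ ≤ x` is
binomial with parameters `n` and `x`, the Kantorovich polynomial is an average of compositions,
`K_n f(x) = 𝔼[f(φ(x))]` with `φ(x) = (#{i | Uᵢ ≤ x} + T) / (n + 1)`, and `φ` is nondecreasing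
from `[0, 1]` to itself. Composing with such a map does not increase the Λ-variation, and averaging
does not either, by the triangle inequality for integrals under each partition sum.

The expectations make sense because `f` is integrable: `f` has a left limit at every point, as
infinitely many jumps of size `ε` towards a point would add up to `∑ ε / λ_j = ∞`, and left limits
force all but countably many points to be points of continuity.
-/

section LamVarOn

variable {l : ℕ → ℝ} {f g : ℝ → ℝ} {K : Set ℝ}

lemma sum_le_lamVarOn {m : ℕ} {x : Fin (m + 1) → ℝ} (hx : Monotone x) (hxK : ∀ j, x j ∈ K)
    (β : Equiv.Perm (Fin m)) :
    ∑ j : Fin m, ENNReal.ofReal (|f (x j.succ) - f (x j.castSucc)| / l (β j)) ≤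
      lamVarOn l f K :=
  le_iSup_of_le m <| le_iSup_of_le x <| le_iSup_of_le hx <| le_iSup_of_le hxK <|
    le_iSup_of_le β le_rfl

lemma lamVarOn_le {C : ℝ≥0∞}
    (h : ∀ (m : ℕ) (x : Fin (m + 1) → ℝ), Monotone x → (∀ j, x j ∈ K) →
      ∀ β : Equiv.Perm (Fin m),
        ∑ j : Fin m, ENNReal.ofReal (|f (x j.succ) - f (x j.castSucc)| / l (β j)) ≤ C) :
    lamVarOn l f K ≤ C :=
  iSup_le fun m => iSup_le fun x => iSup_le fun hx => iSup_le fun hxK => iSup_le fun β =>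
    h m x hx hxK β

lemma lamVarOn_congr (h : EqOn f g K) : lamVarOn l f K = lamVarOn l g K := by
  unfold lamVarOn
  refine iSup_congr fun m => iSup_congr fun x => iSup_congr fun _ => iSup_congr fun hxK =>
    iSup_congr fun β => ?_
  simp only [h (hxK _)]

lemma sum_range_le_lamVarOn {z : ℕ → ℝ} (hz : Monotone z) (hzK : ∀ j, z j ∈ K) (N : ℕ) :
    ∑ j ∈ Finset.range N, ENNReal.ofReal (|f (z (j + 1)) - f (z j)| / l j) ≤
      lamVarOn l f K := by
  simpa [Finset.sum_range] using
    sum_le_lamVarOn (l := l) (f := f) (x := fun j : Fin (N + 1) => z j)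
      (fun _ _ hij => hz hij) (fun j => hzK j) (Equiv.refl _)

lemma tsum_le_lamVarOn {z : ℕ → ℝ} (hz : Monotone z) (hzK : ∀ j, z j ∈ K) :
    ∑' j, ENNReal.ofReal (|f (z (j + 1)) - f (z j)| / l j) ≤ lamVarOn l f K :=
  ENNReal.tsum_le_of_sum_range_le (sum_range_le_lamVarOn hz hzK)

lemma ofReal_abs_sub_div_le_lamVarOn {x y : ℝ} (hx : x ∈ K) (hy : y ∈ K) :
    ENNReal.ofReal (|f y - f x| / l 0) ≤ lamVarOn l f K := by
  wlog hxy : x ≤ y generalizing x y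
  · rw [abs_sub_comm]
    exact this hy hx (le_of_not_ge hxy)
  have hmono : Monotone ![x, y] := by simp [Fin.monotone_iff_le_succ, hxy]
  simpa using sum_le_lamVarOn (l := l) (f := f) hmono (by simp [Fin.forall_fin_two, hx, hy])
    (Equiv.refl _)

end LamVarOn

lemma tsum_ofReal_eq_top_iff {α : Type*} {a : α → ℝ} (ha : ∀ i, 0 ≤ a i) :
    ∑' i, ENNReal.ofReal (a i) = ⊤ ↔ ¬ Summable a := by
  lift a to α → NNReal using ha
  rw [NNReal.summable_coe, ← ENNReal.tsum_coe_ne_top_iff_summable, not_not]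
  simp

section OneSidedLimits

lemma countable_not_continuousAt_of_tendsto_nhdsLT {α E : Type*} [LinearOrder α]
    [TopologicalSpace α] [OrderTopology α] [SecondCountableTopology α] [PseudoMetricSpace E]
    {f : α → E} {s : Set α} (hf : ∀ x ∈ s, ∃ c, Tendsto f (𝓝[<] x) (𝓝 c)) :
    {x ∈ s | ¬ ContinuousAt f x}.Countable := by
  let jumps (k : ℕ) : Set α := {x ∈ s | ∃ᶠ y in 𝓝 x, 1 / ((k : ℝ) + 1) ≤ dist (f y) (f x)}
  have isolated (k : ℕ) : ∀ x ∈ jumps k, 𝓝[jumps k ∩ Iio x] x = ⊥ := by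
    intro x hx
    obtain ⟨c, hc⟩ := hf x hx.1
    have hclose : ∀ᶠ y in 𝓝[<] x, dist (f y) c < 1 / ((k : ℝ) + 1) / 2 :=
      Metric.tendsto_nhds.1 hc _ (by positivity)
    have hno : ∀ᶠ y in 𝓝[<] x, y ∉ jumps k := by
      filter_upwards [eventually_eventually_nhdsWithin.2 hclose, hclose, self_mem_nhdsWithin]
        with y hnear hy hyx hjump
      rw [isOpen_Iio.nhdsWithin_eq hyx] at hnear
      refine hjump.2 (hnear.mono fun z hz => not_le.2 ?_)
      linarith [dist_triangle_right (f z) (f y) c]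
    rw [← eventually_false_iff_eq_bot]
    filter_upwards [nhdsWithin_mono x inter_subset_right hno, self_mem_nhdsWithin] with y hy hyJ
    exact hy hyJ.1
  have countable_jumps (k : ℕ) : (jumps k).Countable := by
    rw [← sep_eq_self_iff_mem_true.2 (isolated k)]
    exact countable_setOfPred_isolated_left_within
  refine (countable_iUnion countable_jumps).mono ?_
  rintro x ⟨hxs, hx⟩
  simp only [Metric.continuousAt_iff', not_forall] at hx
  obtain ⟨ε, hε, hfar⟩ := hx
  obtain ⟨k, hk⟩ := exists_nat_one_div_lt hε
  refine mem_iUnion.2 ⟨k, hxs, (not_eventually.1 hfar).mono fun y hy => ?_⟩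
  exact hk.le.trans (not_lt.1 hy)

lemma exists_tendsto_nhdsLT_of_forall_exists_dist_lt {α E : Type*} [LinearOrder α]
    [TopologicalSpace α] [OrderTopology α] [PseudoMetricSpace E] [CompleteSpace E]
    {f : α → E} {x : α} [(𝓝[<] x).NeBot]
    (h : ∀ ε > 0, ∃ a < x, ∀ y ∈ Ioo a x, dist (f y) (f a) < ε) :
    ∃ c, Tendsto f (𝓝[<] x) (𝓝 c) := by
  rw [← cauchy_map_iff_exists_tendsto, Metric.cauchy_iff]
  refine ⟨inferInstance, fun ε hε => ?_⟩
  obtain ⟨a, hax, ha⟩ := h (ε / 2) (half_pos hε)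
  refine ⟨f '' Ioo a x, image_mem_map (Ioo_mem_nhdsLT hax), ?_⟩
  rintro _ ⟨y, hy, rfl⟩ _ ⟨z, hz, rfl⟩
  linarith [dist_triangle_right (f y) (f z) (f a), ha y hy, ha z hz]

end OneSidedLimits

section Integrable

variable {l : ℕ → ℝ} {f : ℝ → ℝ} {a b : ℝ}

lemma exists_dist_lt_of_lamVarOn_ne_top (hpos : ∀ n, 0 < l n)
    (hdiv : ¬ Summable fun n => 1 / l n) (hf : lamVarOn l f (Icc a b) ≠ ⊤) {x : ℝ}
    (hx : x ∈ Ioc a b) {ε : ℝ} (hε : 0 < ε) :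
    ∃ c < x, ∀ y ∈ Ioo c x, dist (f y) (f c) < ε := by
  by_contra! hjump
  choose! next hnext hfar using hjump
  let z (j : ℕ) : ℝ := next^[j] a
  have hz_succ (j : ℕ) : z (j + 1) = next (z j) := Function.iterate_succ_apply' next j a
  have hz (j : ℕ) : z j ∈ Ico a x := by
    induction j with
    | zero => exact ⟨le_rfl, hx.1⟩
    | succ j ih =>
      rw [hz_succ]
      have := hnext _ ih.2
      exact ⟨ih.1.trans this.1.le, this.2⟩
  have hz_mono : Monotone z := monotone_nat_of_le_succ fun j => by
    rw [hz_succ]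
    exact (hnext _ (hz j).2).1.le
  refine hf (top_le_iff.1 ?_)
  calc ⊤ = ∑' j, ENNReal.ofReal (ε / l j) := by
        refine ((tsum_ofReal_eq_top_iff fun j => (div_pos hε (hpos j)).le).2 ?_).symm
        simpa only [div_eq_mul_one_div ε, summable_mul_left_iff hε.ne'] using hdiv
    _ ≤ ∑' j, ENNReal.ofReal (|f (z (j + 1)) - f (z j)| / l j) := by
        refine ENNReal.tsum_le_tsum fun j => ENNReal.ofReal_le_ofReal ?_
        rw [hz_succ]
        exact div_le_div_of_nonneg_right (hfar _ (hz j).2) (hpos j).le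
    _ ≤ lamVarOn l f (Icc a b) :=
        tsum_le_lamVarOn hz_mono fun j => ⟨(hz j).1, (hz j).2.le.trans hx.2⟩

lemma exists_norm_le_of_lamVarOn_ne_top {K : Set ℝ} (hpos : 0 < l 0) (hf : lamVarOn l f K ≠ ⊤) :
    ∃ M, ∀ x ∈ K, ‖f x‖ ≤ M := by
  rcases K.eq_empty_or_nonempty with rfl | ⟨x₀, hx₀⟩
  · simp
  refine ⟨(lamVarOn l f K).toReal * l 0 + ‖f x₀‖, fun x hx => ?_⟩
  have hdiff : |f x - f x₀| / l 0 ≤ (lamVarOn l f K).toReal :=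
    (ENNReal.ofReal_le_iff_le_toReal hf).1 (ofReal_abs_sub_div_le_lamVarOn hx₀ hx)
  rw [div_le_iff₀ hpos, ← Real.norm_eq_abs] at hdiff
  linarith [norm_le_norm_add_norm_sub' (f x) (f x₀)]

lemma integrableOn_Icc_of_lamVarOn_ne_top (hpos : ∀ n, 0 < l n)
    (hdiv : ¬ Summable fun n => 1 / l n) (hf : lamVarOn l f (Icc a b) ≠ ⊤) :
    IntegrableOn f (Icc a b) := by
  have hcount : {x ∈ Ioc a b | ¬ ContinuousAt f x}.Countable :=
    countable_not_continuousAt_of_tendsto_nhdsLT fun x hx =>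
      exists_tendsto_nhdsLT_of_forall_exists_dist_lt fun ε hε =>
        exists_dist_lt_of_lamVarOn_ne_top hpos hdiv hf hx hε
  set D := {x ∈ Ioc a b | ¬ ContinuousAt f x}
  have hcont : ContinuousOn f (Ioc a b \ D) := fun x hx =>
    (not_not.1 fun h => hx.2 ⟨hx.1, h⟩ : ContinuousAt f x).continuousWithinAt
  have hmeas : MeasurableSet (Ioc a b \ D) := measurableSet_Ioc.diff hcount.measurableSet
  have hae : (Ioc a b \ D : Set ℝ) =ᵐ[volume] Icc a b :=
    (sdiff_null_ae_eq_self (hcount.measure_zero volume)).trans Ioc_ae_eq_Icc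
  obtain ⟨M, hM⟩ := exists_norm_le_of_lamVarOn_ne_top (hpos 0) hf
  refine IntegrableOn.of_bound measure_Icc_lt_top ?_ M
    (ae_restrict_of_forall_mem measurableSet_Icc hM)
  rw [← Measure.restrict_congr_set hae]
  exact hcont.aestronglyMeasurable hmeas

end Integrable

section Averaging

variable {Ω : Type*} [MeasurableSpace Ω] {μ : Measure Ω}

lemma ofReal_abs_integral_div_le_lintegral (h : Ω → ℝ) (c : ℝ) :
    ENNReal.ofReal (|∫ ω, h ω ∂μ| / c) ≤ ∫⁻ ω, ENNReal.ofReal (|h ω| / c) ∂μ := by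
  simp only [div_eq_mul_inv, ENNReal.ofReal_mul (abs_nonneg _), ← Real.enorm_eq_ofReal_abs]
  rw [lintegral_mul_const' _ _ ENNReal.ofReal_ne_top]
  gcongr
  exact enorm_integral_le_lintegral_enorm h

theorem lamVarOn_integral_comp_le (l : ℕ → ℝ) {f : ℝ → ℝ} {φ : Ω → ℝ → ℝ} {K K' : Set ℝ}
    (hmono : ∀ᵐ ω ∂μ, MonotoneOn (φ ω) K) (hmaps : ∀ᵐ ω ∂μ, MapsTo (φ ω) K K')
    (hint : ∀ x ∈ K, Integrable (fun ω => f (φ ω x)) μ) :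
    lamVarOn l (fun x => ∫ ω, f (φ ω x) ∂μ) K ≤ lamVarOn l f K' * μ univ := by
  refine lamVarOn_le fun m x hx hxK β => ?_
  let increment (j : Fin m) (ω : Ω) : ℝ := f (φ ω (x j.succ)) - f (φ ω (x j.castSucc))
  have hincrement (j : Fin m) : Integrable (increment j) μ := (hint _ (hxK _)).sub (hint _ (hxK _))
  calc ∑ j : Fin m, ENNReal.ofReal
        (|∫ ω, f (φ ω (x j.succ)) ∂μ - ∫ ω, f (φ ω (x j.castSucc)) ∂μ| / l (β j))
      = ∑ j : Fin m, ENNReal.ofReal (|∫ ω, increment j ω ∂μ| / l (β j)) := by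
        simp only [increment, integral_sub (hint _ (hxK _)) (hint _ (hxK _))]
    _ ≤ ∑ j : Fin m, ∫⁻ ω, ENNReal.ofReal (|increment j ω| / l (β j)) ∂μ :=
        Finset.sum_le_sum fun j _ => ofReal_abs_integral_div_le_lintegral _ _
    _ = ∫⁻ ω, ∑ j : Fin m, ENNReal.ofReal (|increment j ω| / l (β j)) ∂μ :=
        (lintegral_finsetSum' _ fun j _ =>
          ((hincrement j).aemeasurable.abs.div_const _).ennreal_ofReal).symm
    _ ≤ ∫⁻ _, lamVarOn l f K' ∂μ := by
        refine lintegral_mono_ae ?_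
        filter_upwards [hmono, hmaps] with ω hω_mono hω_maps
        exact sum_le_lamVarOn (fun i j hij => hω_mono (hxK i) (hxK j) (hx hij))
          (fun j => hω_maps (hxK j)) β
    _ = lamVarOn l f K' * μ univ := lintegral_const _

end Averaging

section Binomial

open ProbabilityTheory

variable {ι Ω : Type*} [Fintype ι]

lemma setOfPred_filter_mem_eq_univ_pi (A : Set Ω) [DecidablePred (· ∈ A)] [DecidableEq ι]
    (S : Finset ι) :
    {u : ι → Ω | ({i | u i ∈ A} : Finset ι) = S} =
      univ.pi fun i => if i ∈ S then A else Aᶜ := by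
  ext u
  simp only [mem_ofPred_eq, Finset.ext_iff, Finset.mem_filter_univ, mem_univ_pi]
  refine forall_congr' fun i => ?_
  split_ifs with hi <;> simp [hi]

variable [MeasurableSpace Ω] {μ : Measure Ω} [IsProbabilityMeasure μ] {A : Set Ω}
  [DecidablePred (· ∈ A)]

lemma measurableSet_setOfPred_filter_mem_eq (hA : MeasurableSet A) (S : Finset ι) :
    MeasurableSet {u : ι → Ω | ({i | u i ∈ A} : Finset ι) = S} := by
  classical
  rw [setOfPred_filter_mem_eq_univ_pi]
  refine .univ_pi fun i => ?_
  split_ifs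
  exacts [hA, hA.compl]

lemma measureReal_pi_setOfPred_filter_mem_eq (hA : MeasurableSet A) (S : Finset ι) :
    (Measure.pi fun _ : ι => μ).real {u | ({i | u i ∈ A} : Finset ι) = S} =
      μ.real A ^ S.card * (1 - μ.real A) ^ (Fintype.card ι - S.card) := by
  classical
  rw [setOfPred_filter_mem_eq_univ_pi, measureReal_def, Measure.pi_pi, ENNReal.toReal_prod]
  simp only [apply_ite, ← measureReal_def, Finset.prod_ite, Finset.prod_const,
    probReal_compl_eq_one_sub hA]
  simp [Finset.filter_not, Finset.card_sdiff]

lemma hasLaw_card_filter_mem (hA : MeasurableSet A) {p : unitInterval} (hp : μ.real A = p) :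
    HasLaw (fun u : ι → Ω => ({i | u i ∈ A} : Finset ι).card)
      (binomial (Fintype.card ι) p) (Measure.pi fun _ => μ) := by
  classical
  have hmeas : Measurable fun u : ι → Ω => ({i | u i ∈ A} : Finset ι).card := by
    simp only [Finset.card_filter]
    refine Finset.measurable_sum _ fun i _ => ?_
    exact Measurable.ite (measurable_pi_apply i hA) measurable_const measurable_const
  refine ⟨hmeas.aemeasurable, Measure.ext_of_measureReal_singleton fun k => ?_⟩
  rw [map_measureReal_apply hmeas (measurableSet_singleton k), binomial_real_singleton]
  have hfibre : (fun u : ι → Ω => ({i | u i ∈ A} : Finset ι).card) ⁻¹' {k} =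
      ⋃ S ∈ Finset.powersetCard k (Finset.univ : Finset ι),
        {u | ({i | u i ∈ A} : Finset ι) = S} := by
    ext u
    simp
  have hmass (S : Finset ι) (hS : S ∈ Finset.powersetCard k Finset.univ) :
      (Measure.pi fun _ : ι => μ).real {u | ({i | u i ∈ A} : Finset ι) = S} =
        (p : ℝ) ^ k * (1 - p) ^ (Fintype.card ι - k) := by
    rw [measureReal_pi_setOfPred_filter_mem_eq hA, (Finset.mem_powersetCard.1 hS).2, hp]
  rw [hfibre, measureReal_biUnion_finset, Finset.sum_congr rfl hmass]
  · simp [mul_assoc]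
  · intro S _ T _ hST
    exact Set.disjoint_left.2 fun u hS hT => hST (hS.symm.trans hT)
  · exact fun S _ => measurableSet_setOfPred_filter_mem_eq hA S

end Binomial

section Kantorovich

open ProbabilityTheory

variable {n : ℕ} {f : ℝ → ℝ}

/-- The average of `f` over the interval `[y / (n + 1), (y + 1) / (n + 1)]`, parametrised by
`[0, 1]`. For integers `y = k ≤ n` these are the coefficients of the `n`-th Kantorovich polynomial;
allowing real `y` makes `cellAverage n f` a function on `[0, n]` whose Λ-variation can be
measured. -/
noncomputable def cellAverage (n : ℕ) (f : ℝ → ℝ) (y : ℝ) : ℝ :=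
  ∫ t in (0 : ℝ)..1, f ((y + t) / (n + 1))

/-- The number of entries of the sample `u` that are at most `x`. For a uniformly distributed sample
it is binomial with parameter `x`, and it couples all these binomial variables monotonically. -/
noncomputable def countLE (u : Fin n → unitInterval) (x : ℝ) : ℕ :=
  ({i | (u i : ℝ) ≤ x} : Finset (Fin n)).card

lemma countLE_le (u : Fin n → unitInterval) (x : ℝ) : countLE u x ≤ n :=
  (Finset.card_filter_le _ _).trans_eq (by simp)

lemma countLE_mono (u : Fin n → unitInterval) : Monotone (countLE u) := fun _ _ hxy =>
  Finset.card_le_card <| Finset.monotone_filter_right _ fun _ _ hi => hi.trans hxy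

lemma hasLaw_countLE (n : ℕ) (x : unitInterval) :
    HasLaw (fun u : Fin n → unitInterval => countLE u x) (binomial n x) := by
  have hvol : (volume : Measure unitInterval).real (Iic x) = x := by
    simp [measureReal_def, x.2.1]
  simpa [countLE, volume_pi] using hasLaw_card_filter_mem (ι := Fin n) measurableSet_Iic hvol

lemma mul_integral_cell_eq_cellAverage (n k : ℕ) (f : ℝ → ℝ) :
    (n + 1) * ∫ t in ((k : ℝ) / (n + 1))..(((k : ℝ) + 1) / (n + 1)), f t =
      cellAverage n f k := by
  have hn : (n : ℝ) + 1 ≠ 0 := by positivity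
  simp [cellAverage, add_div, intervalIntegral.integral_comp_add_div f hn]

lemma kant_eq_integral_countLE {x : ℝ} (hx : x ∈ Icc (0 : ℝ) 1) :
    kant n f x = ∫ u : Fin n → unitInterval, cellAverage n f (countLE u x) := by
  lift x to unitInterval using hx
  calc kant n f x
      = ∫ k, cellAverage n f k ∂binomial n x := by
        rw [integral_binomial, ← Nat.range_succ_eq_Iic]
        simp only [kant, mul_integral_cell_eq_cellAverage, smul_eq_mul]
    _ = ∫ u : Fin n → unitInterval, cellAverage n f (countLE u x) :=
        ((hasLaw_countLE n x).integral_comp .of_discrete).symm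

lemma lamVar_kant_le_lamVarOn_cellAverage (l : ℕ → ℝ) (f : ℝ → ℝ) (n : ℕ) :
    lamVar l (kant n f) ≤ lamVarOn l (cellAverage n f) (Icc 0 n) := by
  rw [lamVar, lamVarOn_congr fun x hx => kant_eq_integral_countLE hx]
  refine (lamVarOn_integral_comp_le l (K' := Icc 0 n)
    (φ := fun (u : Fin n → unitInterval) x => countLE u x) ?_ ?_ ?_).trans_eq (by simp)
  · exact .of_forall fun u => (Nat.mono_cast.comp (countLE_mono u)).monotoneOn _
  · exact .of_forall fun u x _ => ⟨Nat.cast_nonneg _, Nat.cast_le.2 (countLE_le u x)⟩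
  · intro x hx
    lift x to unitInterval using hx
    have hlaw := hasLaw_countLE n x
    exact (hlaw.map_eq ▸ integrable_binomial
      fun k => cellAverage n f k).comp_aemeasurable hlaw.aemeasurable

lemma intervalIntegrable_comp_add_div (hf : IntegrableOn f (Icc 0 1)) {y : ℝ}
    (hy : y ∈ Icc (0 : ℝ) n) :
    IntervalIntegrable (fun t => f ((y + t) / (n + 1))) volume 0 1 := by
  have hn : (0 : ℝ) < n + 1 := by positivity
  have hcell : IntervalIntegrable f volume (y / (n + 1)) ((y + 1) / (n + 1)) := by
    rw [intervalIntegrable_iff_integrableOn_Icc_of_le (by gcongr; linarith)]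
    refine hf.mono_set (Icc_subset_Icc (div_nonneg hy.1 hn.le) ?_)
    rw [div_le_one hn]
    linarith [hy.2]
  simpa [hn.ne', div_eq_mul_inv] using
    (hcell.comp_mul_right (c := ((n : ℝ) + 1)⁻¹)).comp_add_left y

lemma lamVarOn_cellAverage_le (l : ℕ → ℝ) (hf : IntegrableOn f (Icc 0 1)) (n : ℕ) :
    lamVarOn l (cellAverage n f) (Icc 0 n) ≤ lamVar l f := by
  have hn : (0 : ℝ) < n + 1 := by positivity
  have hcell : cellAverage n f = fun y => ∫ t in Ioc (0 : ℝ) 1, f ((y + t) / (n + 1)) :=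
    funext fun y => intervalIntegral.integral_of_le zero_le_one
  rw [hcell]
  refine (lamVarOn_integral_comp_le l (K' := Icc 0 1)
    (φ := fun t y => (y + t) / (n + 1)) ?_ ?_ fun y hy => ?_).trans_eq (by simp [lamVar])
  · exact .of_forall fun t x _ y _ hxy => by dsimp only; gcongr
  · refine ae_restrict_of_forall_mem measurableSet_Ioc fun t ht y hy => ⟨?_, ?_⟩
    · exact div_nonneg (add_nonneg hy.1 ht.1.le) hn.le
    · exact (div_le_one hn).2 (add_le_add hy.2 ht.2)
  · exact (intervalIntegrable_iff_integrableOn_Ioc_of_le zero_le_one).1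
      (intervalIntegrable_comp_add_div hf hy)

theorem lamVar_kant_le_of_integrableOn (l : ℕ → ℝ) (hf : IntegrableOn f (Icc 0 1)) (n : ℕ) :
    lamVar l (kant n f) ≤ lamVar l f :=
  (lamVar_kant_le_lamVarOn_cellAverage l f n).trans (lamVarOn_cellAverage_le l hf n)

end Kantorovich

theorem kantorovich_diminishes_lamVar_general (l : ℕ → ℝ) (hpos : ∀ n, 0 < l n)
    (hdiv : ¬ Summable fun n => 1 / l n) (f : ℝ → ℝ) (n : ℕ) :
    lamVar l (kant n f) ≤ lamVar l f := by
  rcases eq_or_ne (lamVar l f) ⊤ with htop | hfin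
  · exact htop ▸ le_top
  · exact lamVar_kant_le_of_integrableOn l (integrableOn_Icc_of_lamVarOn_ne_top hpos hdiv hfin) n

/-- The Kantorovich polynomials diminish the Λ-variation:
if `Λ` is a Λ-sequence and `f ∈ ΛBV`, then `V_Λ(K_n f) ≤ V_Λ(f)` for every `n ∈ ℕ`. -/
theorem kantorovich_diminishes_lamVar (l : ℕ → ℝ) (hl : IsLambdaSeq l)
    (f : ℝ → ℝ) (hf : lamVar l f < ⊤) (n : ℕ) :
    lamVar l (kant n f) ≤ lamVar l f :=
  kantorovich_diminishes_lamVar_general l hl.2.1 hl.2.2 f n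
end

section
/- If Λ is a Λ-sequence and f ∈ 𝔄, then ‖B_nf‖_Λ → ‖f‖_Λ as n → ∞ (as a limit in [0,∞]: if f is of bounded Λ-variation the norms converge to ‖f‖_Λ, and otherwise V_Λ(B_nf) → ∞). -/
open Filter Set MeasureTheory
open scoped ENNReal Topology

/-- The class `𝔄`: bounded functions on `[0,1]` with one-sided limits at every interior
point, whose value there lies between the two one-sided limits. -/
def MemA (f : ℝ → ℝ) : Prop :=
  (∃ C : ℝ, ∀ x ∈ Set.Icc (0 : ℝ) 1, |f x| ≤ C) ∧
  ∀ x ∈ Set.Ioo (0 : ℝ) 1, ∃ L R : ℝ,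
    Tendsto f (𝓝[<] x) (𝓝 L) ∧ Tendsto f (𝓝[>] x) (𝓝 R) ∧
    min L R ≤ f x ∧ f x ≤ max L R

/-!
Both bounds rest on the convexity and continuity of the sum `∑ⱼ |v_{j+1} - v_j| / λ_{β(j)}` in the
tuple `v`.

For `V_Λ(B_n f) ≤ V_Λ(f)`, realise `B_n f (x)` as the expectation of `f (k / n)`, where `k` counts
those of `n` independent uniform thresholds that are at most `x`. This `k` is monotone in `x`, so
along a monotone tuple the values of `B_n f` are an average of values of `f` along monotone tuples.

For `V_Λ(f) ≤ liminf V_Λ(B_n f)`, note that `B_n f → f` on a set `D` that contains the endpoints and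
all interior continuity points of `f`, that is, all but countably many points. Hence `(p, f (p±))`
lies in the closure of the graph of `f` over `D`, and `f p` is a convex combination of `f (p-)` and
`f (p+)`, so that `V_Λ(f)` is already the variation over partitions into points of `D`.
-/

section LambdaVariation

variable {l : ℕ → ℝ} {f g : ℝ → ℝ} {K D : Set ℝ} {m : ℕ}

/-- The sum `∑ⱼ |v_{j+1} - v_j| / λ_{β(j)}` of a tuple `v`, so that the Λ-variation of `f` is the
supremum of `lamSum l β (f ∘ x)`. Regarding it as a function of the tuple alone exposes its
convexity. -/
noncomputable def lamSum (l : ℕ → ℝ) (β : Equiv.Perm (Fin m)) (v : Fin (m + 1) → ℝ) : ℝ≥0∞ :=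
  ∑ j : Fin m, ENNReal.ofReal (|v j.succ - v j.castSucc| / l (β j))

lemma lamVarOn_le_iff {c : ℝ≥0∞} :
    lamVarOn l f K ≤ c ↔ ∀ (m : ℕ) (x : Fin (m + 1) → ℝ), Monotone x → (∀ j, x j ∈ K) →
      ∀ β : Equiv.Perm (Fin m), lamSum l β (f ∘ x) ≤ c := by
  simp only [lamVarOn, iSup_le_iff]
  rfl

lemma lt_lamVarOn_iff {c : ℝ≥0∞} :
    c < lamVarOn l f K ↔ ∃ (m : ℕ) (x : Fin (m + 1) → ℝ), Monotone x ∧ (∀ j, x j ∈ K) ∧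
      ∃ β : Equiv.Perm (Fin m), c < lamSum l β (f ∘ x) := by
  simp only [lamVarOn, lt_iSup_iff, exists_prop]
  rfl

lemma lamSum_comp_le_lamVarOn {x : Fin (m + 1) → ℝ} (hx : Monotone x) (hxK : ∀ j, x j ∈ K)
    (β : Equiv.Perm (Fin m)) : lamSum l β (f ∘ x) ≤ lamVarOn l f K :=
  lamVarOn_le_iff.1 le_rfl m x hx hxK β

lemma lamVarOn_mono (h : D ⊆ K) : lamVarOn l f D ≤ lamVarOn l f K :=
  lamVarOn_le_iff.2 fun _ _ hx hxD β => lamSum_comp_le_lamVarOn hx (fun j => h (hxD j)) β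

lemma continuous_lamSum (β : Equiv.Perm (Fin m)) : Continuous (lamSum l β) :=
  continuous_finsetSum _ fun _ _ => ENNReal.continuous_ofReal.comp (by fun_prop)

lemma convexOn_sum_abs_sub_div (hl : ∀ n, 0 < l n) (β : Equiv.Perm (Fin m)) :
    ConvexOn ℝ univ fun v : Fin (m + 1) → ℝ =>
      ∑ j : Fin m, |v j.succ - v j.castSucc| / l (β j) := by
  refine ⟨convex_univ, fun v _ w _ a b ha hb _ => ?_⟩
  simp only [smul_eq_mul, Finset.mul_sum, ← Finset.sum_add_distrib, Pi.add_apply, Pi.smul_apply]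
  gcongr with j
  have := (hl (β j)).le
  calc |a * v j.succ + b * w j.succ - (a * v j.castSucc + b * w j.castSucc)| / l (β j)
      = |a * (v j.succ - v j.castSucc) + b * (w j.succ - w j.castSucc)| / l (β j) := by ring_nf
    _ ≤ (|a * (v j.succ - v j.castSucc)| + |b * (w j.succ - w j.castSucc)|) / l (β j) := by
        gcongr
        exact abs_add_le _ _
    _ = a * (|v j.succ - v j.castSucc| / l (β j)) + b * (|w j.succ - w j.castSucc| / l (β j)) := by
        rw [abs_mul, abs_mul, abs_of_nonneg ha, abs_of_nonneg hb]
        ring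

lemma quasiconvexOn_lamSum (hl : ∀ n, 0 < l n) (β : Equiv.Perm (Fin m)) :
    QuasiconvexOn ℝ univ (lamSum l β) := by
  have hofReal : lamSum l β = ENNReal.ofReal ∘
      fun v => ∑ j : Fin m, |v j.succ - v j.castSucc| / l (β j) := by
    ext1 v
    exact (ENNReal.ofReal_sum_of_nonneg fun j _ => div_nonneg (abs_nonneg _) (hl _).le).symm
  exact hofReal ▸ (convexOn_sum_abs_sub_div hl β).quasiconvexOn.monotone_comp ENNReal.ofReal_mono

lemma convex_setOfPred_lamSum_le (hl : ∀ n, 0 < l n) (β : Equiv.Perm (Fin m)) (c : ℝ≥0∞) :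
    Convex ℝ {v | lamSum l β v ≤ c} := by
  simpa using quasiconvexOn_lamSum hl β c

lemma isClosed_setOfPred_lamSum_le (β : Equiv.Perm (Fin m)) (c : ℝ≥0∞) :
    IsClosed {v | lamSum l β v ≤ c} :=
  isClosed_le (continuous_lamSum β) continuous_const

lemma eventually_lt_lamVarOn {ι : Type*} {u : Filter ι} {F : ι → ℝ → ℝ}
    (hF : ∀ p ∈ K, Tendsto (F · p) u (𝓝 (f p))) {c : ℝ≥0∞} (hc : c < lamVarOn l f K) :
    ∀ᶠ i in u, c < lamVarOn l (F i) K := by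
  obtain ⟨m, x, hx, hxK, β, hcx⟩ := lt_lamVarOn_iff.1 hc
  have hlim : Tendsto (fun i => F i ∘ x) u (𝓝 (f ∘ x)) :=
    tendsto_pi_nhds.2 fun j => hF (x j) (hxK j)
  filter_upwards [((continuous_lamSum β).tendsto _ |>.comp hlim).eventually_const_lt hcx] with i hi
  exact hi.trans_le (lamSum_comp_le_lamVarOn hx hxK β)

lemma lamVarOn_le_of_graphOn_subset_closure (h : K.graphOn g ⊆ closure (D.graphOn f)) :
    lamVarOn l g K ≤ lamVarOn l f D := by
  refine lamVarOn_le_iff.2 fun m x hx hxK β => ?_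
  let q : Fin (m + 1) → K := fun j => ⟨x j, hxK j⟩
  let Z : K → ℝ × ℝ := fun p => (p, g p)
  let u : Filter (K → ℝ × ℝ) := 𝓝[univ.pi fun _ => D.graphOn f] Z
  have hu : u.NeBot := by
    rw [← mem_closure_iff_nhdsWithin_neBot, closure_pi_set]
    exact fun p _ => h (mem_image_of_mem _ p.2)
  have hZ (p : K) : Tendsto (fun z : K → ℝ × ℝ => z p) u (𝓝 (p, g p)) :=
    ((continuous_apply p).tendsto Z).mono_left nhdsWithin_le_nhds
  have hmono : ∀ᶠ z in u, Monotone fun j => (z (q j)).1 := by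
    refine eventually_all.2 fun i => eventually_all.2 fun j => eventually_imp_distrib_left.2 ?_
    intro hij
    rcases (hx hij).eq_or_lt with heq | hlt
    · have : q i = q j := Subtype.ext heq
      simp [this]
    · exact ((hZ (q i)).fst_nhds.eventually_lt (hZ (q j)).fst_nhds hlt).mono fun _ => le_of_lt
  have hle : ∀ᶠ z in u, lamSum l β (fun j => (z (q j)).2) ≤ lamVarOn l f D := by
    filter_upwards [hmono, self_mem_nhdsWithin] with z hz hzD
    have hz' (j) := mem_graphOn.1 (hzD (q j) (mem_univ _))
    rw [← funext fun j => (hz' j).2]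
    exact lamSum_comp_le_lamVarOn hz (fun j => (hz' j).1) β
  have hlim : Tendsto (fun z j => (z (q j)).2) u (𝓝 (g ∘ x)) :=
    tendsto_pi_nhds.2 fun j => (hZ (q j)).snd_nhds
  exact le_of_tendsto (((continuous_lamSum β).tendsto _).comp hlim) hle

lemma lamVarOn_le_of_forall_mem_convexHull (hl : ∀ n, 0 < l n)
    (h : ∀ p ∈ K, f p ∈ convexHull ℝ {v | (p, v) ∈ closure (D.graphOn f)}) :
    lamVarOn l f K ≤ lamVarOn l f D := by
  refine lamVarOn_le_iff.2 fun m x hx hxK β => ?_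
  let restrictTuple : (range x → ℝ) →ₗ[ℝ] (Fin (m + 1) → ℝ) :=
    LinearMap.funLeft ℝ ℝ (rangeFactorization x)
  have hhull : (fun p : range x => f p) ∈
      convexHull ℝ (univ.pi fun p : range x => {v | ((p : ℝ), v) ∈ closure (D.graphOn f)}) :=
    mem_convexHull_pi fun p _ => h p (by obtain ⟨_, j, rfl⟩ := p; exact hxK j)
  refine convexHull_min (fun w hw => ?_)
    ((convex_setOfPred_lamSum_le hl β (lamVarOn l f D)).linear_preimage restrictTuple) hhull
  let g : ℝ → ℝ := Function.extend Subtype.val w 0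
  have hg (p : range x) : g p = w p := Subtype.val_injective.extend_apply w 0 p
  have hgraph : (range x).graphOn g ⊆ closure (D.graphOn f) := by
    rintro _ ⟨p, hp, rfl⟩
    have := hw ⟨p, hp⟩ (mem_univ _)
    rwa [← hg] at this
  have hgx : restrictTuple w = g ∘ x := funext fun j => (hg ⟨x j, mem_range_self j⟩).symm
  change lamSum l β (restrictTuple w) ≤ _
  rw [hgx]
  exact (lamSum_comp_le_lamVarOn hx mem_range_self β).trans
    (lamVarOn_le_of_graphOn_subset_closure hgraph)

end LambdaVariation

section OneSidedLimits

lemma mem_closure_graphOn_of_tendsto {X Y : Type*} [TopologicalSpace X] [TopologicalSpace Y]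
    {f : X → Y} {U D : Set X} {p : X} {v : Y} (hv : Tendsto f (𝓝[U] p) (𝓝 v))
    (hp : p ∈ closure (U ∩ D)) : (p, v) ∈ closure (D.graphOn f) := by
  have := mem_closure_iff_nhdsWithin_neBot.1 hp
  have hgraph : Tendsto (fun y => (y, f y)) (𝓝[U ∩ D] p) (𝓝 (p, v)) :=
    (tendsto_id.mono_left nhdsWithin_le_nhds).prodMk_nhds
      (hv.mono_left (nhdsWithin_mono p inter_subset_left))
  exact mem_closure_of_tendsto hgraph
    (eventually_mem_nhdsWithin.mono fun y hy => mem_image_of_mem _ hy.2)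

lemma eventually_oscillation_lt_of_tendsto {X Y : Type*} [TopologicalSpace X]
    [PseudoEMetricSpace Y] {f : X → Y} {U : Set X} (hU : IsOpen U) {p : X} {v : Y}
    (hv : Tendsto f (𝓝[U] p) (𝓝 v)) {ε : ℝ≥0∞} (hε : 0 < ε) :
    ∀ᶠ y in 𝓝[U] p, oscillation f y < ε := by
  obtain ⟨r, hr, hrε⟩ := exists_between hε
  have hball : ∀ᶠ y in 𝓝[U] p, f y ∈ Metric.eball v (r / 2) :=
    hv.eventually_mem (Metric.eball_mem_nhds v (ENNReal.half_pos hr.ne'))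
  filter_upwards [eventually_eventually_nhdsWithin.2 hball, self_mem_nhdsWithin] with y hy hyU
  have hmem : Metric.eball v (r / 2) ∈ (𝓝 y).map f := by rwa [hU.nhdsWithin_eq hyU] at hy
  calc oscillation f y ≤ Metric.ediam (Metric.eball v (r / 2)) := biInf_le _ hmem
    _ ≤ 2 * (r / 2) := Metric.ediam_eball_le
    _ = r := ENNReal.mul_div_cancel two_ne_zero ENNReal.ofNat_ne_top
    _ < ε := hrε

lemma countable_not_continuousAt_of_tendsto_nhdsGT {X Y : Type*} [TopologicalSpace X]
    [LinearOrder X] [OrderTopology X] [SecondCountableTopology X] [PseudoEMetricSpace Y]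
    {f : X → Y} {s : Set X} (h : ∀ p ∈ s, ∃ v, Tendsto f (𝓝[>] p) (𝓝 v)) :
    {p ∈ s | ¬ContinuousAt f p}.Countable := by
  obtain ⟨ε, -, hε, hlim⟩ := exists_seq_strictAnti_tendsto' (zero_lt_one' ℝ≥0∞)
  let A (n : ℕ) : Set X := {p ∈ s | ε n ≤ oscillation f p}
  have hA (n : ℕ) : (A n).Countable := by
    have hisolated : A n ⊆ {p ∈ A n | 𝓝[A n ∩ Ioi p] p = ⊥} := by
      refine fun p hp => ⟨hp, ?_⟩
      obtain ⟨v, hv⟩ := h p hp.1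
      rw [inter_comm, nhdsWithin_inter', inf_principal_eq_bot]
      filter_upwards [eventually_oscillation_lt_of_tendsto isOpen_Ioi hv (hε n).1] with y hy hyA
      exact hyA.2.not_gt hy
    exact countable_setOfPred_isolated_right_within.mono hisolated
  refine (countable_iUnion hA).mono fun p hp => mem_iUnion.2 ?_
  have hosc : 0 < oscillation f p :=
    pos_iff_ne_zero.2 fun h0 => hp.2 ((Oscillation.eq_zero_iff_continuousAt f p).1 h0)
  obtain ⟨n, hn⟩ := (hlim.eventually_lt_const hosc).exists
  exact ⟨n, hp.1, hn.le⟩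

end OneSidedLimits

section BernsteinSum

/-- The Bernstein sum `∑ᵢ C(n, i) hᵢ xⁱ (1 - x)ⁿ⁻ⁱ` with coefficients `h`. Since the coefficients do
not depend on `n`, unlike the values `f (i / n)`, it satisfies a recursion in `n`. -/
noncomputable def bernSum (n : ℕ) (h : ℕ → ℝ) (x : ℝ) : ℝ :=
  ∑ ij ∈ Finset.HasAntidiagonal.antidiagonal n,
    (n.choose ij.1 : ℝ) * (h ij.1 * x ^ ij.1 * (1 - x) ^ ij.2)

lemma bern_eq_bernSum (n : ℕ) (f : ℝ → ℝ) (x : ℝ) :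
    bern n f x = bernSum n (fun k => f (k / n)) x := by
  rw [bern, bernSum, Finset.Nat.sum_antidiagonal_eq_sum_range_succ_mk]
  exact Finset.sum_congr rfl fun k _ => by ring

lemma bernSum_zero (h : ℕ → ℝ) (x : ℝ) : bernSum 0 h x = h 0 := by
  simp [bernSum]

lemma bernSum_succ (n : ℕ) (h : ℕ → ℝ) (x : ℝ) :
    bernSum (n + 1) h x = (1 - x) * bernSum n h x + x * bernSum n (fun k => h (k + 1)) x := by
  simp only [bernSum, Finset.mul_sum]
  rw [Finset.sum_antidiagonal_choose_succ_mul fun i j => h i * x ^ i * (1 - x) ^ j]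
  congr 1 <;> refine Finset.sum_congr rfl fun ij hij => ?_
  · ring
  · rw [Nat.choose_symm_of_eq_add (Finset.HasAntidiagonal.mem_antidiagonal.1 hij).symm]
    ring

lemma integrableOn_ite_le (x a b : ℝ) :
    IntegrableOn (fun t : ℝ => if t ≤ x then b else a) (Icc 0 1) :=
  Integrable.piecewise (s := Iic x) measurableSet_Iic (integrable_const b).integrableOn
    (integrable_const a).integrableOn

lemma setIntegral_ite_le {x : ℝ} (hx : x ∈ Icc (0 : ℝ) 1) (a b : ℝ) :
    ∫ t in Icc (0 : ℝ) 1, (if t ≤ x then b else a) = (1 - x) * a + x * b := by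
  have hIcc : Iic x ∩ Icc (0 : ℝ) 1 = Icc 0 x := by grind
  have hIoc : (Iic x)ᶜ ∩ Icc (0 : ℝ) 1 = Ioc x 1 := by grind
  calc ∫ t in Icc (0 : ℝ) 1, (if t ≤ x then b else a)
      = (∫ _ in Icc 0 x, b) + ∫ _ in Ioc x 1, a := by
        rw [← hIcc, ← hIoc, ← Measure.restrict_restrict measurableSet_Iic,
          ← Measure.restrict_restrict measurableSet_Iic.compl]
        exact integral_piecewise (s := Iic x) measurableSet_Iic (integrable_const b).integrableOn
          (integrable_const a).integrableOn
    _ = (1 - x) * a + x * b := by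
        simp [hx.1, hx.2, add_comm]

variable {ι : Type*} [Finite ι] {S : Set (ι → ℝ)} {x : ι → ℝ}

-- Average over a threshold `t` that is uniformly distributed on `[0, 1]`.
lemma convexComb_mem_of_forall_ite_mem (hS : Convex ℝ S) (hSc : IsClosed S)
    (hx : ∀ j, x j ∈ Icc (0 : ℝ) 1) {a b : ι → ℝ}
    (h : ∀ t : ℝ, (fun j => if t ≤ x j then b j else a j) ∈ S) :
    (fun j => (1 - x j) * a j + x j * b j) ∈ S := by
  cases nonempty_fintype ι
  have : IsProbabilityMeasure (volume.restrict (Icc (0 : ℝ) 1)) := ⟨by simp⟩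
  have hint (j : ι) := integrableOn_ite_le (x j) (a j) (b j)
  have hmem := hS.integral_mem hSc (Eventually.of_forall h) (Integrable.of_eval hint)
  convert hmem using 1
  ext j
  rw [eval_integral hint, setIntegral_ite_le (hx j)]

-- A binomial variable is coupled monotonically to its parameter: each coin toss compares all the
-- `x j` with the same random threshold.
lemma bernSum_mem_of_forall_monotone_mem [Preorder ι] (hS : Convex ℝ S) (hSc : IsClosed S)
    (hx : Monotone x) (hx01 : ∀ j, x j ∈ Icc (0 : ℝ) 1) {n : ℕ} {h : ℕ → ℝ} {k : ι → ℕ}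
    (hk : Monotone k) (hmem : ∀ k' : ι → ℕ, Monotone k' → (∀ j, k' j ≤ k j + n) → h ∘ k' ∈ S) :
    (fun j => bernSum n (fun i => h (i + k j)) (x j)) ∈ S := by
  induction n generalizing k with
  | zero => simpa only [bernSum_zero, zero_add] using! hmem k hk fun j => le_rfl
  | succ n ih =>
    simp only [bernSum_succ]
    refine convexComb_mem_of_forall_ite_mem hS hSc hx01 fun t => ?_
    let k' : ι → ℕ := fun j => k j + if t ≤ x j then 1 else 0
    have hk' : Monotone k' := hk.add fun i j hij => by
      have := hx hij
      grind
    have hk'_le (j : ι) : k' j ≤ k j + 1 := by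
      grind
    convert ih hk' fun κ hκ hle => hmem κ hκ fun j => (hle j).trans (by grind) using 2 with j
    split_ifs with hj <;> simp [k', hj, add_assoc, add_comm 1]

end BernsteinSum

section Bernstein

variable {n : ℕ} {f : ℝ → ℝ} {y : ℝ}

lemma bern_zero (n : ℕ) (f : ℝ → ℝ) : bern n f 0 = f 0 := by
  simp [bern, Finset.sum_range_succ']

lemma bern_one (hn : n ≠ 0) (f : ℝ → ℝ) : bern n f 1 = f 1 := by
  rw [bern, Finset.sum_eq_single_of_mem n (Finset.self_mem_range_succ n)]
  · simp [hn]
  · intro k hk hkn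
    have : n - k ≠ 0 := by grind
    simp [this]

lemma lamVar_bern_le {l : ℕ → ℝ} (hl : ∀ i, 0 < l i) (n : ℕ) (f : ℝ → ℝ) :
    lamVar l (bern n f) ≤ lamVar l f := by
  refine lamVarOn_le_iff.2 fun m x hx hx01 β => ?_
  have hmem := bernSum_mem_of_forall_monotone_mem (n := n) (h := fun i => f (i / n)) (k := 0)
    (convex_setOfPred_lamSum_le hl β (lamVar l f)) (isClosed_setOfPred_lamSum_le β _) hx hx01
    monotone_const fun k hk hkn => ?_
  · simpa only [Pi.zero_apply, add_zero, ← bern_eq_bernSum] using! hmem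
  · refine lamSum_comp_le_lamVarOn (x := fun j => (k j : ℝ) / n) (fun i j hij => ?_) (fun j => ?_) β
    · have := hk hij
      dsimp only
      gcongr
    · have hkj : k j ≤ n := by simpa using hkn j
      exact ⟨by positivity, div_le_one_of_le₀ (mod_cast hkj) (by positivity)⟩

lemma bern_eq_sum_bernstein (n : ℕ) (f : ℝ → ℝ) (y : unitInterval) :
    bern n f y = ∑ k : Fin (n + 1), f (k / n) * bernstein n k y := by
  rw [bern, Finset.sum_range]
  exact Finset.sum_congr rfl fun k _ => by rw [bernstein_apply]; ring

lemma abs_bern_sub_le (hn : n ≠ 0) (hy : y ∈ Icc (0 : ℝ) 1) {c ε K : ℝ}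
    (h : ∀ t ∈ Icc (0 : ℝ) 1, |f t - c| ≤ ε + K * (y - t) ^ 2) :
    |bern n f y - c| ≤ ε + K * (y * (1 - y) / n) := by
  lift y to unitInterval using hy
  have hprob := bernstein.probability n y
  have hvar := bernstein.variance (mod_cast hn) y
  calc |bern n f y - c|
      = |∑ k : Fin (n + 1), (f (k / n) - c) * bernstein n k y| := by
        simp only [bern_eq_sum_bernstein, sub_mul, Finset.sum_sub_distrib, ← Finset.mul_sum, hprob,
          mul_one]
    _ ≤ ∑ k : Fin (n + 1), |f (k / n) - c| * bernstein n k y := by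
        refine (Finset.abs_sum_le_sum_abs _ _).trans_eq (Finset.sum_congr rfl fun k _ => ?_)
        rw [abs_mul, abs_of_nonneg bernstein_nonneg]
    _ ≤ ∑ k : Fin (n + 1), (ε + K * (y - k / n) ^ 2) * bernstein n k y := by
        gcongr with k
        exact h _ ⟨by positivity, div_le_one_of_le₀ (mod_cast k.is_le) (by positivity)⟩
    _ = ε * ∑ k : Fin (n + 1), bernstein n k y +
          K * ∑ k : Fin (n + 1), (y - k / n : ℝ) ^ 2 * bernstein n k y := by
        simp only [add_mul, Finset.sum_add_distrib, Finset.mul_sum, mul_assoc]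
    _ = ε + K * (y * (1 - y) / n) := by
        rw [hprob, mul_one]
        congr 2

lemma exists_abs_sub_le_add_mul_sq {s : Set ℝ} {C : ℝ} (hC : ∀ t ∈ s, |f t| ≤ C) (hy : y ∈ s)
    (hf : ContinuousWithinAt f s y) {ε : ℝ} (hε : 0 < ε) :
    ∃ K, ∀ t ∈ s, |f t - f y| ≤ ε + K * (y - t) ^ 2 := by
  obtain ⟨δ, hδ, hnear⟩ := Metric.continuousWithinAt_iff.1 hf ε hε
  have hC0 : 0 ≤ C := (abs_nonneg _).trans (hC y hy)
  refine ⟨2 * C / δ ^ 2, fun t ht => ?_⟩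
  rcases lt_or_ge (dist t y) δ with hlt | hge
  · have hfar : 0 ≤ 2 * C / δ ^ 2 * (y - t) ^ 2 := by positivity
    have := (hnear ht hlt).le
    rw [Real.dist_eq] at this
    linarith
  · have hsq : δ ^ 2 ≤ (y - t) ^ 2 := by
      rw [← sq_abs (y - t), abs_sub_comm, ← Real.dist_eq]
      gcongr
    calc |f t - f y| ≤ |f t| + |f y| := abs_sub _ _
      _ ≤ 2 * C / δ ^ 2 * δ ^ 2 := by
        rw [div_mul_cancel₀ _ (by positivity)]
        linarith [hC t ht, hC y hy]
      _ ≤ 2 * C / δ ^ 2 * (y - t) ^ 2 := by gcongr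
      _ ≤ ε + 2 * C / δ ^ 2 * (y - t) ^ 2 := by linarith

lemma tendsto_bern_of_continuousWithinAt {C : ℝ} (hC : ∀ t ∈ Icc (0 : ℝ) 1, |f t| ≤ C)
    (hy : y ∈ Icc (0 : ℝ) 1) (hf : ContinuousWithinAt f (Icc 0 1) y) :
    Tendsto (fun n => bern n f y) atTop (𝓝 (f y)) := by
  refine Metric.tendsto_nhds.2 fun ε hε => ?_
  obtain ⟨K, hK⟩ := exists_abs_sub_le_add_mul_sq hC hy hf (half_pos hε)
  have hlim : Tendsto (fun n : ℕ => ε / 2 + K * (y * (1 - y) / n)) atTop (𝓝 (ε / 2)) := by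
    have hvar := tendsto_const_div_atTop_nhds_zero_nat (y * (1 - y))
    simpa using (hvar.const_mul K).const_add (ε / 2)
  filter_upwards [hlim.eventually_lt_const (half_lt_self hε), eventually_ne_atTop 0] with n hlt hn
  exact (abs_bern_sub_le hn hy hK).trans_lt hlt

end Bernstein

/-- The points of `[0, 1]` at which the Bernstein polynomials of `f` converge to `f`. For `f ∈ 𝔄`,
partitions into such points suffice to compute the Λ-variation. -/
def bernConvSet (f : ℝ → ℝ) : Set ℝ :=
  {p ∈ Icc 0 1 | Tendsto (fun n => bern n f p) atTop (𝓝 (f p))}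

namespace MemA

variable {f : ℝ → ℝ} {p : ℝ}

lemma subset_closure_inter_bernConvSet (hf : MemA f) {U : Set ℝ} (hU : IsOpen U)
    (hU01 : U ⊆ Ioo 0 1) : U ⊆ closure (U ∩ bernConvSet f) := by
  obtain ⟨C, hC⟩ := hf.1
  have hdense : Dense {p ∈ Ioo 0 1 | ¬ContinuousAt f p}ᶜ := by
    refine (countable_not_continuousAt_of_tendsto_nhdsGT fun p hp => ?_).dense_compl ℝ
    obtain ⟨-, R, -, hR, -⟩ := hf.2 p hp
    exact ⟨R, hR⟩
  refine (hdense.open_subset_closure_inter hU).trans (closure_mono ?_)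
  rintro p ⟨hpU, hp⟩
  have hcont : ContinuousAt f p := not_not.1 fun h => hp ⟨hU01 hpU, h⟩
  have hp01 : p ∈ Icc 0 1 := Ioo_subset_Icc_self (hU01 hpU)
  exact ⟨hpU, hp01, tendsto_bern_of_continuousWithinAt hC hp01 hcont.continuousWithinAt⟩

lemma mem_closure_Iio_inter_bernConvSet (hf : MemA f) (hp : p ∈ Ioo 0 1) :
    p ∈ closure (Iio p ∩ bernConvSet f) := by
  have hsub : Ioo 0 p ⊆ closure (Iio p ∩ bernConvSet f) :=
    (hf.subset_closure_inter_bernConvSet isOpen_Ioo (Ioo_subset_Ioo_right hp.2.le)).trans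
      (closure_mono (inter_subset_inter_left _ Ioo_subset_Iio_self))
  exact closure_minimal hsub isClosed_closure
    (by rw [closure_Ioo hp.1.ne]; exact right_mem_Icc.2 hp.1.le)

lemma mem_closure_Ioi_inter_bernConvSet (hf : MemA f) (hp : p ∈ Ioo 0 1) :
    p ∈ closure (Ioi p ∩ bernConvSet f) := by
  have hsub : Ioo p 1 ⊆ closure (Ioi p ∩ bernConvSet f) :=
    (hf.subset_closure_inter_bernConvSet isOpen_Ioo (Ioo_subset_Ioo_left hp.1.le)).trans
      (closure_mono (inter_subset_inter_left _ Ioo_subset_Ioi_self))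
  exact closure_minimal hsub isClosed_closure
    (by rw [closure_Ioo hp.2.ne]; exact left_mem_Icc.2 hp.2.le)

lemma mem_convexHull_closure_graphOn (hf : MemA f) (hp : p ∈ Icc 0 1) :
    f p ∈ convexHull ℝ {v | (p, v) ∈ closure ((bernConvSet f).graphOn f)} := by
  by_cases hpD : p ∈ bernConvSet f
  · exact subset_convexHull ℝ _ (subset_closure (mem_image_of_mem _ hpD))
  have hp0 : p ≠ 0 := by
    rintro rfl
    exact hpD ⟨hp, by simp only [bern_zero, tendsto_const_nhds]⟩
  have hp1 : p ≠ 1 := by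
    rintro rfl
    exact hpD ⟨hp, tendsto_const_nhds.congr' <|
      (eventually_ne_atTop 0).mono fun n hn => (bern_one hn f).symm⟩
  have hp01 : p ∈ Ioo 0 1 := ⟨hp.1.lt_of_ne' hp0, hp.2.lt_of_ne hp1⟩
  obtain ⟨L, R, hL, hR, hmin, hmax⟩ := hf.2 p hp01
  have hpair : {L, R} ⊆ {v | (p, v) ∈ closure ((bernConvSet f).graphOn f)} :=
    pair_subset (mem_closure_graphOn_of_tendsto hL (hf.mem_closure_Iio_inter_bernConvSet hp01))
      (mem_closure_graphOn_of_tendsto hR (hf.mem_closure_Ioi_inter_bernConvSet hp01))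
  refine convexHull_mono hpair ?_
  rw [convexHull_pair, segment_eq_uIcc]
  exact ⟨hmin, hmax⟩

lemma lamVar_le_lamVarOn_bernConvSet (hf : MemA f) {l : ℕ → ℝ} (hl : ∀ n, 0 < l n) :
    lamVar l f ≤ lamVarOn l f (bernConvSet f) :=
  lamVarOn_le_of_forall_mem_convexHull hl fun _ hp => hf.mem_convexHull_closure_graphOn hp

lemma tendsto_lamVar_bern (hf : MemA f) {l : ℕ → ℝ} (hl : ∀ n, 0 < l n) :
    Tendsto (fun n => lamVar l (bern n f)) atTop (𝓝 (lamVar l f)) := by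
  refine tendsto_order.2 ⟨fun c hc => ?_, fun c hc => ?_⟩
  · have hcD := hc.trans_le (hf.lamVar_le_lamVarOn_bernConvSet hl)
    filter_upwards [eventually_lt_lamVarOn (fun p hp => hp.2) hcD] with n hn
    exact hn.trans_le (lamVarOn_mono fun p hp => hp.1)
  · exact Eventually.of_forall fun n => (lamVar_bern_le hl n f).trans_lt hc

end MemA

theorem lamNorm_bernstein_tendsto_of_memA_general {l : ℕ → ℝ} (hl : ∀ n, 0 < l n) {f : ℝ → ℝ}
    (hf : MemA f) : Tendsto (fun n => lamNorm l (bern n f)) atTop (𝓝 (lamNorm l f)) := by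
  simp only [lamNorm, bern_zero]
  exact (hf.tendsto_lamVar_bern hl).add tendsto_const_nhds

/-- If `Λ` is a Λ-sequence and `f ∈ 𝔄`, then `‖B_n f‖_Λ → ‖f‖_Λ`
as a limit in `[0,∞]`. -/
theorem lamNorm_bernstein_tendsto_of_memA (l : ℕ → ℝ) (hl : IsLambdaSeq l)
    (f : ℝ → ℝ) (hf : MemA f) :
    Tendsto (fun n => lamNorm l (bern n f)) atTop (𝓝 (lamNorm l f)) := by
  exact lamNorm_bernstein_tendsto_of_memA_general hl.2.1 hf
end
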